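/- arXiv:2402.15167 — 2 statements merged into one kernel-verified Lean document; each statement's English description precedes it below -/
import Mathlib

section
/- Fix integers N ≥ 2, d ≥ 1 and let K be any integer with K ≥ dN + 1. The set Θ = {(y_1, …, y_K) ∈ (ℝ^d)^K : there exists X ∉ Ω with f̃_{y_k}(X) = 0 for every k ∈ {1, …, K}} has Lebesgue measure zero in ℝ^{dK}. -/
/-- `f̃_y(X) = ∏_{i<j} yᵀ(X_i − X_j)`. -/
noncomputable def ftilde (N d : ℕ) (y : Fin d → ℝ) (X : Fin N → Fin d → ℝ) : ℝ :=
  ∏ i : Fin N, ∏ j ∈ Finset.Ioi i, (∑ l : Fin d, y l * (X i l - X j l))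

/-- The intrinsic zero set `Ω`. -/
def intrinsicZero (N d : ℕ) : Set (Fin N → Fin d → ℝ) :=
  {X | ∃ i j : Fin N, i ≠ j ∧ X i = X j}

/-!
Choose, for every `k`, a pair `i < j` whose factor in `ftilde N d (Y k) X` vanishes. There are
finitely many choices, and for a fixed one the conditions `(X i - X j) ⬝ᵥ Y k = 0` are linear in
`X`. Impose them one after the other. As long as the space of remaining `X` contains a point outside
`Ω`, almost every next vector `Y k` gives a functional that does not vanish identically on this
space, so the dimension drops by one. By translation one may start from `{X | X 0 = 0}`, of
dimension `d * (N - 1)`; after that many steps only `X = 0` is left, which lies in `Ω` when `2 ≤ N`.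

Fubini's theorem turns this into a null set: the bad tuples are measurable, because they form a
projection of a locally closed set, which is σ-compact.
-/

open MeasureTheory Module

theorem measurableSet_image_of_isLocallyClosed {X Y : Type*} [TopologicalSpace X]
    [LocallyCompactSpace X] [SecondCountableTopology X] [TopologicalSpace Y] [T2Space Y]
    [MeasurableSpace Y] [OpensMeasurableSpace Y] {f : X → Y} {s : Set X} (hf : ContinuousOn f s)
    (hs : IsLocallyClosed s) : MeasurableSet (f '' s) := by
  have := hs.locallyCompactSpace
  have hs_compact : IsSigmaCompact s := isSigmaCompact_iff_sigmaCompactSpace.2 inferInstance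
  obtain ⟨C, hC, hC_union⟩ := hs_compact.image_of_continuousOn hf
  rw [← hC_union]
  exact .iUnion fun n => (hC n).measurableSet

section SingularTuples

variable {𝕜 E V : Type*} [Field 𝕜] [AddCommGroup E] [Module 𝕜 E] [AddCommGroup V] [Module 𝕜 V]

/-- The tuples `y` for which the functionals `x ↦ B k x (y k)` have a common zero `x ≠ 0` in `W`.
Points `x` with `B k x = 0` for some `k` are excluded: there the `k`-th condition holds for all
`y k`. -/
def singularTuples {n : ℕ} (B : Fin n → E →ₗ[𝕜] V →ₗ[𝕜] 𝕜) (W : Submodule 𝕜 E) :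
    Set (Fin n → V) :=
  {y | ∃ x ∈ W, x ≠ 0 ∧ ∀ k, B k x ≠ 0 ∧ B k x (y k) = 0}

theorem singularTuples_eq_empty_of_finrank_eq_zero {n : ℕ} (B : Fin n → E →ₗ[𝕜] V →ₗ[𝕜] 𝕜)
    {W : Submodule 𝕜 E} [FiniteDimensional 𝕜 W] (hW : finrank 𝕜 W = 0) :
    singularTuples B W = ∅ := by
  rw [Submodule.finrank_eq_zero] at hW
  subst hW
  refine Set.eq_empty_of_forall_notMem ?_
  rintro y ⟨x, hx, hx0, -⟩
  exact hx0 ((Submodule.mem_bot 𝕜).1 hx)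

theorem preimage_cons_singularTuples_subset {n : ℕ} (B : Fin (n + 1) → E →ₗ[𝕜] V →ₗ[𝕜] 𝕜)
    (W : Submodule 𝕜 E) (v : V) :
    Fin.cons v ⁻¹' singularTuples B W ⊆
      singularTuples (Fin.tail B) (W ⊓ LinearMap.ker ((B 0).flip v)) := by
  rintro y ⟨x, hxW, hx0, hx⟩
  exact ⟨x, ⟨hxW, (hx 0).2⟩, hx0, fun k => hx k.succ⟩

end SingularTuples

section RealSingularTuples

variable {V : Type*} [NormedAddCommGroup V] [NormedSpace ℝ V] [FiniteDimensional ℝ V]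
  [MeasurableSpace V] [BorelSpace V]

theorem ae_finrank_inf_ker_flip_lt {E : Type*} [AddCommGroup E] [Module ℝ E] (μ : Measure V)
    [μ.IsAddHaarMeasure] (B : E →ₗ[ℝ] V →ₗ[ℝ] ℝ)
    {W : Submodule ℝ E} [FiniteDimensional ℝ W] {x : E} (hxW : x ∈ W) (hx : B x ≠ 0) :
    ∀ᵐ v ∂μ, finrank ℝ ↥(W ⊓ LinearMap.ker (B.flip v)) < finrank ℝ W := by
  have h_null : μ (LinearMap.ker (B x)) = 0 :=
    Measure.addHaar_submodule μ _ (by rwa [ne_eq, LinearMap.ker_eq_top])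
  filter_upwards [measure_eq_zero_iff_ae_notMem.1 h_null] with v hv
  refine Submodule.finrank_lt_finrank_of_lt (lt_of_le_of_ne inf_le_left fun h_eq => hv ?_)
  exact (inf_eq_left.1 h_eq) hxW

variable {E : Type*} [NormedAddCommGroup E] [NormedSpace ℝ E] [FiniteDimensional ℝ E]

theorem measurableSet_singularTuples {n : ℕ} (B : Fin n → E →ₗ[ℝ] V →ₗ[ℝ] ℝ)
    (W : Submodule ℝ E) : MeasurableSet (singularTuples B W) := by
  let U : Set E := {x | x ≠ 0 ∧ ∀ k, B k x ≠ 0}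
  let Z : Set (E × (Fin n → V)) := {p | p.1 ∈ W ∧ ∀ k, B k p.1 (p.2 k) = 0}
  have hU : IsOpen U := by
    simp only [U, Set.ofPred_and, Set.ofPred_forall]
    exact isOpen_ne.inter <| isOpen_iInter_of_finite fun k =>
      (LinearMap.ker (B k)).closed_of_finiteDimensional.isOpen_compl
  have hZ : IsClosed Z := by
    have hB (k : Fin n) : Continuous fun p : E × (Fin n → V) => B k p.1 (p.2 k) := by
      change Continuous fun p : E × (Fin n → V) => (B k).toContinuousBilinearMap p.1 (p.2 k)
      fun_prop
    simp only [Z, Set.ofPred_and, Set.ofPred_forall]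
    exact (W.closed_of_finiteDimensional.preimage continuous_fst).inter <|
      isClosed_iInter fun k => isClosed_eq (hB k) continuous_const
  have h_image : singularTuples B W = Prod.snd '' (Prod.fst ⁻¹' U ∩ Z) := by
    ext y
    constructor
    · rintro ⟨x, hxW, hx0, hx⟩
      exact ⟨(x, y), ⟨⟨hx0, fun k => (hx k).1⟩, hxW, fun k => (hx k).2⟩, rfl⟩
    · rintro ⟨⟨x, _⟩, ⟨⟨hx0, hBx⟩, hxW, hBxy⟩, rfl⟩
      exact ⟨x, hxW, hx0, fun k => ⟨hBx k, hBxy k⟩⟩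
  rw [h_image]
  exact measurableSet_image_of_isLocallyClosed continuousOn_snd
    ((hU.preimage continuous_fst).isLocallyClosed.inter hZ.isLocallyClosed)

theorem measure_pi_singularTuples_eq_zero (μ : Measure V) [μ.IsAddHaarMeasure] {n : ℕ}
    (B : Fin n → E →ₗ[ℝ] V →ₗ[ℝ] ℝ) {W : Submodule ℝ E} (hW : finrank ℝ W ≤ n) :
    Measure.pi (fun _ => μ) (singularTuples B W) = 0 := by
  induction n generalizing W with
  | zero => simp [singularTuples_eq_empty_of_finrank_eq_zero B (Nat.le_zero.1 hW)]
  | succ n ih =>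
    obtain h_empty | ⟨y, x, hxW, -, hx⟩ := (singularTuples B W).eq_empty_or_nonempty
    · simp [h_empty]
    let cons := (MeasurableEquiv.piFinSuccAbove (fun _ : Fin (n + 1) => V) 0).symm
    have h_cons : MeasurePreserving cons (μ.prod (.pi fun _ => μ)) (.pi fun _ => μ) :=
      (measurePreserving_piFinSuccAbove (fun _ => μ) 0).symm
    rw [← h_cons.measure_preimage_equiv, Measure.measure_prod_null
      (cons.measurable (measurableSet_singularTuples B W))]
    filter_upwards [ae_finrank_inf_ker_flip_lt μ (B 0) hxW (hx 0).1] with v hv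
    have h_slice : Prod.mk v ⁻¹' (cons ⁻¹' singularTuples B W) =
        Fin.cons v ⁻¹' singularTuples B W := by
      ext y
      simp [cons, MeasurableEquiv.piFinSuccAbove, Fin.consEquiv]
    rw [h_slice]
    exact measure_mono_null (preimage_cons_singularTuples_subset B W v) (ih _ (by lia))

end RealSingularTuples

theorem finrank_ker_proj {ι K V : Type*} [Fintype ι] [DivisionRing K] [AddCommGroup V] [Module K V]
    [FiniteDimensional K V] (i : ι) :
    finrank K (LinearMap.ker (LinearMap.proj i : (ι → V) →ₗ[K] V)) =
      finrank K V * (Fintype.card ι - 1) := by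
  have h_range : LinearMap.range (LinearMap.proj i : (ι → V) →ₗ[K] V) = ⊤ :=
    LinearMap.range_eq_top.2 (Function.surjective_eval i)
  have h := (LinearMap.proj i : (ι → V) →ₗ[K] V).finrank_range_add_finrank_ker
  rw [h_range, finrank_top, finrank_pi_fintype, Finset.sum_const, smul_eq_mul,
    Finset.card_univ] at h
  rw [Nat.mul_sub_one, mul_comm, ← h, Nat.add_sub_cancel_left]

section diffPairing

variable {R ι m : Type*} [CommRing R] [Fintype m]

/-- The pairing `(X, y) ↦ yᵀ(X_i − X_j)` of configurations with vectors, bilinear so that for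
fixed `y` it is a linear condition on `X`. -/
def diffPairing (i j : ι) : (ι → m → R) →ₗ[R] (m → R) →ₗ[R] R :=
  let proj (i : ι) : (ι → m → R) →ₗ[R] m → R := LinearMap.proj i
  dotProductBilin R R ∘ₗ (proj i - proj j)

theorem diffPairing_apply (i j : ι) (X : ι → m → R) (y : m → R) :
    diffPairing i j X y = (X i - X j) ⬝ᵥ y := rfl

theorem diffPairing_eq_zero_iff {i j : ι} {X : ι → m → R} : diffPairing i j X = 0 ↔ X i = X j := by
  simp only [LinearMap.ext_iff, diffPairing_apply, LinearMap.zero_apply, dotProduct_eq_zero_iff,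
    sub_eq_zero]

theorem diffPairing_sub_const (i j : ι) (X : ι → m → R) (c : m → R) :
    diffPairing i j (X - fun _ => c) = diffPairing i j X := by
  ext; simp [diffPairing_apply]

end diffPairing

theorem ftilde_eq_zero_iff {N d : ℕ} {y : Fin d → ℝ} {X : Fin N → Fin d → ℝ} :
    ftilde N d y X = 0 ↔ ∃ i j, i < j ∧ diffPairing i j X y = 0 := by
  simp [ftilde, Finset.prod_eq_zero_iff, diffPairing_apply, dotProduct, mul_comm]

theorem exists_mem_singularTuples_of_ftilde_eq_zero {N d K : ℕ} {i₀ i₁ : Fin N} (h_ne : i₁ ≠ i₀)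
    {X : Fin N → Fin d → ℝ} (hX : X ∉ intrinsicZero N d) {Y : Fin K → Fin d → ℝ}
    (hY : ∀ k, ftilde N d (Y k) X = 0) :
    ∃ p : Fin K → Fin N × Fin N, Y ∈ singularTuples (fun k => diffPairing (p k).1 (p k).2)
      (LinearMap.ker (LinearMap.proj i₀)) := by
  have h_inj {i j : Fin N} (hij : i ≠ j) : X i ≠ X j := fun h => hX ⟨i, j, hij, h⟩
  choose i j hij h_zero using fun k => ftilde_eq_zero_iff.1 (hY k)
  refine ⟨fun k => (i k, j k), X - fun _ => X i₀, by simp, fun h => ?_, fun k => ?_⟩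
  · exact h_inj h_ne (sub_eq_zero.1 (congrFun h i₁))
  · rw [diffPairing_sub_const, ne_eq, diffPairing_eq_zero_iff]
    exact ⟨h_inj (hij k).ne, h_zero k⟩

theorem stmt_1_general (N d K : ℕ) (hN : 2 ≤ N) (hK : d * (N - 1) ≤ K) :
    volume {Y : Fin K → Fin d → ℝ | ∃ X : Fin N → Fin d → ℝ, X ∉ intrinsicZero N d ∧
      ∀ k : Fin K, ftilde N d (Y k) X = 0} = 0 := by
  let i₀ : Fin N := ⟨0, by lia⟩
  let i₁ : Fin N := ⟨1, by lia⟩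
  have h_ne : i₁ ≠ i₀ := by simp [i₀, i₁]
  let W : Submodule ℝ (Fin N → Fin d → ℝ) := LinearMap.ker (LinearMap.proj i₀)
  have hW : finrank ℝ W ≤ K := by simpa [W, finrank_ker_proj] using hK
  refine measure_mono_null (t := ⋃ p : Fin K → Fin N × Fin N,
    singularTuples (fun k => diffPairing (p k).1 (p k).2) W) ?_ ?_
  · rintro Y ⟨X, hX, hY⟩
    exact Set.mem_iUnion.2 (exists_mem_singularTuples_of_ftilde_eq_zero h_ne hX hY)
  · exact measure_iUnion_null fun p => measure_pi_singularTuples_eq_zero volume _ hW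

theorem stmt_1 (N d K : ℕ) (hN : 2 ≤ N) (hd : 1 ≤ d) (hK : d * N + 1 ≤ K) :
    MeasureTheory.volume
      {Y : Fin K → Fin d → ℝ |
        ∃ X : Fin N → Fin d → ℝ, X ∉ intrinsicZero N d ∧
          ∀ k : Fin K, ftilde N d (Y k) X = 0} = 0 :=
  stmt_1_general N d K hN (by rw [Nat.mul_sub_one]; lia)
end

section
/- Fix integers N ≥ 2, d ≥ 1, K ≥ 1, let y_1, …, y_K ∈ ℝ^d satisfy the support condition ⋂_{k=1}^{K} {X : f̃_{y_k}(X) = 0} = Ω, and let f_k be the corresponding normalized basis (f_k(X) = f̃_{y_k}(X)/√(∑_i f̃_{y_i}(X)²) off Ω and f_k = 0 on Ω). Then for every anti-symmetric continuous Ψ : (ℝ^d)^N → ℝ, the functions g_k := f_k·Ψ are continuous and symmetric, and ∑_{k=1}^{K} f_k(X)·g_k(X) = Ψ(X) for all X ∈ (ℝ^d)^N. -/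
open Classical in
/-- The normalized basis `f_k`. -/
noncomputable def fBasis (N d K : ℕ) (y : Fin K → Fin d → ℝ) (k : Fin K)
    (X : Fin N → Fin d → ℝ) : ℝ :=
  if X ∈ intrinsicZero N d then 0
  else ftilde N d (y k) X / Real.sqrt (∑ i : Fin K, (ftilde N d (y i) X) ^ 2)

/-- `Ψ` is anti-symmetric. -/
def IsAntisym (N d : ℕ) (Ψ : (Fin N → Fin d → ℝ) → ℝ) : Prop :=
  ∀ (π : Equiv.Perm (Fin N)) (X : Fin N → Fin d → ℝ),
    Ψ (fun i => X (π i)) = ((Equiv.Perm.sign π : ℤ) : ℝ) * Ψ X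

/-- `Ψ` is symmetric. -/
def IsSym (N d : ℕ) (Ψ : (Fin N → Fin d → ℝ) → ℝ) : Prop :=
  ∀ (π : Equiv.Perm (Fin N)) (X : Fin N → Fin d → ℝ),
    Ψ (fun i => X (π i)) = Ψ X

lemma continuous_mul_of_isBoundedUnder_of_eq_zero {α R : Type*} [TopologicalSpace α]
    [NonUnitalSeminormedRing R] {f g : α → R} (hg : Continuous g)
    (hf : ∀ x, g x ≠ 0 → ContinuousAt f x)
    (hbdd : ∀ x, g x = 0 → (nhds x).IsBoundedUnder (· ≤ ·) (fun z => ‖f z‖)) :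
    Continuous fun x => f x * g x := by
  rw [continuous_iff_continuousAt]
  intro x
  by_cases hx : g x = 0
  · rw [ContinuousAt, hx, mul_zero]
    exact Filter.isBoundedUnder_le_mul_tendsto_zero (hbdd x hx) (hx ▸ hg.tendsto x)
  · exact (hf x hx).mul hg.continuousAt

section Symmetry

variable {N d : ℕ} {Φ Ψ : (Fin N → Fin d → ℝ) → ℝ}

lemma IsAntisym.mul (hΦ : IsAntisym N d Φ) (hΨ : IsAntisym N d Ψ) :
    IsSym N d (fun X => Φ X * Ψ X) := by
  intro π X
  have sign_mul_self : ((Equiv.Perm.sign π : ℤ) : ℝ) * ((Equiv.Perm.sign π : ℤ) : ℝ) = 1 :=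
    mod_cast Int.units_coe_mul_self (Equiv.Perm.sign π)
  simp only [hΦ π X, hΨ π X]
  rw [mul_mul_mul_comm, sign_mul_self, one_mul]

lemma IsAntisym.div (hΦ : IsAntisym N d Φ) (hΨ : IsSym N d Ψ) :
    IsAntisym N d (fun X => Φ X / Ψ X) := by
  intro π X
  simp only [hΦ π X, hΨ π X, mul_div_assoc]

lemma IsAntisym.eq_zero_of_mem_intrinsicZero (hΨ : IsAntisym N d Ψ) {X : Fin N → Fin d → ℝ}
    (hX : X ∈ intrinsicZero N d) : Ψ X = 0 := by
  obtain ⟨i, j, hij, hXij⟩ := hX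
  have comp_swap : X ∘ Equiv.swap i j = X := funext (Equiv.apply_swap_eq_self hXij)
  have eq_neg : Ψ X = -Ψ X := by
    calc Ψ X = Ψ (X ∘ Equiv.swap i j) := by rw [comp_swap]
      _ = ((Equiv.Perm.sign (Equiv.swap i j) : ℤ) : ℝ) * Ψ X := hΨ (Equiv.swap i j) X
      _ = -Ψ X := by simp [Equiv.Perm.sign_swap hij]
  exact self_eq_neg.1 eq_neg

end Symmetry

section Ftilde

variable {N d : ℕ} (y : Fin d → ℝ)

lemma ftilde_eq_det_vandermonde (X : Fin N → Fin d → ℝ) :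
    ftilde N d y X = (Matrix.vandermonde fun i => -(y ⬝ᵥ X i)).det := by
  have dotProduct_diff (i j : Fin N) :
      ∑ l, y l * (X i l - X j l) = -(y ⬝ᵥ X j) - -(y ⬝ᵥ X i) := by
    simp only [dotProduct, mul_sub, Finset.sum_sub_distrib]
    ring
  simp only [ftilde, Matrix.det_vandermonde, dotProduct_diff]

lemma isAntisym_ftilde : IsAntisym N d (ftilde N d y) := by
  intro π X
  rw [ftilde_eq_det_vandermonde, ftilde_eq_det_vandermonde, ← Matrix.det_permute]
  rfl

lemma continuous_ftilde : Continuous (ftilde N d y) := by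
  unfold ftilde
  fun_prop

end Ftilde

section NormalizedBasis

variable {N d K : ℕ} {y : Fin K → Fin d → ℝ} {X : Fin N → Fin d → ℝ}

/-- The normalizer in the definition of the basis `f_k`, that is, the Euclidean norm of the vector
`(f̃_{y_1}(X), …, f̃_{y_K}(X))`. -/
noncomputable def ftildeNorm (y : Fin K → Fin d → ℝ) (X : Fin N → Fin d → ℝ) : ℝ :=
  √(∑ i, ftilde N d (y i) X ^ 2)

lemma sq_ftildeNorm : ftildeNorm y X ^ 2 = ∑ i, ftilde N d (y i) X ^ 2 :=
  Real.sq_sqrt (Finset.sum_nonneg fun _ _ => sq_nonneg _)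

lemma ftildeNorm_eq_zero_iff : ftildeNorm y X = 0 ↔ ∀ k, ftilde N d (y k) X = 0 := by
  rw [← sq_eq_zero_iff, sq_ftildeNorm, Finset.sum_eq_zero_iff_of_nonneg fun _ _ => sq_nonneg _]
  simp only [Finset.mem_univ, true_imp_iff, sq_eq_zero_iff]

lemma abs_ftilde_le_ftildeNorm (k : Fin K) : |ftilde N d (y k) X| ≤ ftildeNorm y X :=
  Real.abs_le_sqrt <| Finset.single_le_sum (f := fun i => ftilde N d (y i) X ^ 2)
    (fun _ _ => sq_nonneg _) (Finset.mem_univ k)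

lemma isSym_ftildeNorm : IsSym N d (ftildeNorm y) := by
  intro π X
  have sq_comp_perm (i : Fin K) :
      ftilde N d (y i) (fun j => X (π j)) ^ 2 = ftilde N d (y i) X ^ 2 := by
    simpa only [sq] using (isAntisym_ftilde (y i)).mul (isAntisym_ftilde (y i)) π X
  simp only [ftildeNorm, sq_comp_perm]

lemma continuous_ftildeNorm : Continuous (ftildeNorm (N := N) y) :=
  (continuous_finsetSum _ fun i _ => (continuous_ftilde (y i)).pow 2).sqrt

lemma fBasis_eq_ftilde_div_ftildeNorm (k : Fin K) :
    fBasis N d K y k = fun X => ftilde N d (y k) X / ftildeNorm y X := by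
  ext X
  by_cases hX : X ∈ intrinsicZero N d
  · simp only [fBasis, if_pos hX, (isAntisym_ftilde (y k)).eq_zero_of_mem_intrinsicZero hX,
      zero_div]
  · simp only [fBasis, if_neg hX, ftildeNorm]

lemma isAntisym_fBasis (k : Fin K) : IsAntisym N d (fBasis N d K y k) := by
  rw [fBasis_eq_ftilde_div_ftildeNorm]
  exact (isAntisym_ftilde (y k)).div isSym_ftildeNorm

lemma abs_fBasis_le_one (k : Fin K) : |fBasis N d K y k X| ≤ 1 := by
  have ftildeNorm_nonneg : 0 ≤ ftildeNorm y X := Real.sqrt_nonneg _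
  rw [fBasis_eq_ftilde_div_ftildeNorm, abs_div, abs_of_nonneg ftildeNorm_nonneg]
  exact div_le_one_of_le₀ (abs_ftilde_le_ftildeNorm k) ftildeNorm_nonneg

lemma continuousAt_fBasis (k : Fin K) (hX : ftildeNorm y X ≠ 0) :
    ContinuousAt (fBasis N d K y k) X := by
  rw [fBasis_eq_ftilde_div_ftildeNorm]
  exact (continuous_ftilde (y k)).continuousAt.div continuous_ftildeNorm.continuousAt hX

lemma sum_sq_fBasis_eq_one (hX : ftildeNorm y X ≠ 0) : ∑ k, fBasis N d K y k X ^ 2 = 1 := by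
  simp only [fBasis_eq_ftilde_div_ftildeNorm, div_pow, ← Finset.sum_div]
  rw [← sq_ftildeNorm, div_self (pow_ne_zero 2 hX)]

lemma continuous_fBasis_mul {Ψ : (Fin N → Fin d → ℝ) → ℝ} (k : Fin K) (hΨ : Continuous Ψ)
    (hzero : ∀ X, ftildeNorm y X = 0 → Ψ X = 0) :
    Continuous fun X => fBasis N d K y k X * Ψ X :=
  continuous_mul_of_isBoundedUnder_of_eq_zero hΨ
    (fun X hX => continuousAt_fBasis k (mt (hzero X) hX))
    (fun _ _ => Filter.isBoundedUnder_of ⟨1, fun _ => abs_fBasis_le_one k⟩)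

lemma sum_fBasis_mul_fBasis_mul {c : ℝ} (hzero : ftildeNorm y X = 0 → c = 0) :
    ∑ k, fBasis N d K y k X * (fBasis N d K y k X * c) = c := by
  by_cases hX : ftildeNorm y X = 0
  · simp only [hzero hX, mul_zero, Finset.sum_const_zero]
  · simp only [← mul_assoc, ← sq, ← Finset.sum_mul, sum_sq_fBasis_eq_one hX, one_mul]

end NormalizedBasis

theorem stmt_10 (N d K : ℕ) (hN : 2 ≤ N) (hd : 1 ≤ d) (hK : 1 ≤ K)
    (y : Fin K → Fin d → ℝ)
    (hsupp : (⋂ k : Fin K, {X : Fin N → Fin d → ℝ | ftilde N d (y k) X = 0})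
      = intrinsicZero N d)
    (Ψ : (Fin N → Fin d → ℝ) → ℝ) (hΨcont : Continuous Ψ) (hΨanti : IsAntisym N d Ψ) :
    (∀ k : Fin K, Continuous (fun X => fBasis N d K y k X * Ψ X)) ∧
    (∀ k : Fin K, IsSym N d (fun X => fBasis N d K y k X * Ψ X)) ∧
    (∀ X : Fin N → Fin d → ℝ,
      ∑ k : Fin K, fBasis N d K y k X * (fBasis N d K y k X * Ψ X) = Ψ X) := by
  have hzero (X : Fin N → Fin d → ℝ) (hX : ftildeNorm y X = 0) : Ψ X = 0 :=
    hΨanti.eq_zero_of_mem_intrinsicZero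
      (hsupp.subset (Set.mem_iInter.2 (ftildeNorm_eq_zero_iff.1 hX)))
  exact ⟨fun k => continuous_fBasis_mul k hΨcont hzero,
    fun k => (isAntisym_fBasis k).mul hΨanti,
    fun X => sum_fBasis_mul_fBasis_mul (hzero X)⟩
end
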